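/- arXiv:2106.12092 — 3 statements merged into one kernel-verified Lean document; each statement's English description precedes it below -/
import Mathlib

section
/- Let E be a complex Banach space, p ≥ 0, and f̂ ∈ E[[x₁,…,x_d]] a formal power series. Then f̂(x) is (p,…,p)-Gevrey if and only if f̂(Mx) is (p,…,p)-Gevrey for every invertible matrix M ∈ GL_d(ℂ) (here f̂(Mx) denotes the formal power series obtained by substituting the linear change of variables x ↦ Mx). -/
/-!
STATEMENT 5 (stability of Gevrey classes under linear changes of variables).
Let E be a complex Banach space, p ≥ 0, and f̂ ∈ E[[x₁,…,x_d]] a formal power series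
(represented by its family of coefficients a : ℕ^d → E).  Then f̂ is (p,…,p)-Gevrey
if and only if f̂(Mx) is (p,…,p)-Gevrey for every M ∈ GL_d(ℂ).
-/

noncomputable section

open Finset

/-- `f̂ = Σ_β a_β x^β` is `(p,…,p)`-Gevrey: `‖a_β‖ ≤ C A^{|β|} (β₁!⋯β_d!)^p`. -/
def IsGevreyP {E : Type*} [NormedAddCommGroup E] (d : ℕ) (p : ℝ)
    (a : (Fin d → ℕ) → E) : Prop :=
  ∃ C A : ℝ, 0 < C ∧ 0 < A ∧ ∀ β : Fin d → ℕ,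
    ‖a β‖ ≤ C * A ^ (∑ i, β i) * ∏ i, ((β i).factorial : ℝ) ^ p

/-- The finite set of all multi-indices `β ∈ ℕ^d` with `|β| = n`. -/
def degTuples (d n : ℕ) : Finset (Fin d → ℕ) :=
  (Fintype.piFinset fun _ => Finset.range (n + 1)).filter fun β => ∑ i, β i = n

/-- The coefficients of `f̂(Mx) = Σ_β a_β (Mx)^β`: the coefficient of `x^γ` is
`Σ_{|β|=|γ|} (coefficient of x^γ in ∏_i (Σ_j M_{ij} x_j)^{β_i}) • a_β`. -/
def linChangeCoeff {E : Type*} [NormedAddCommGroup E] [NormedSpace ℂ E] {d : ℕ}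
    (M : Matrix (Fin d) (Fin d) ℂ) (a : (Fin d → ℕ) → E) (γ : Fin d → ℕ) : E :=
  ∑ β ∈ degTuples d (∑ i, γ i),
    (MvPolynomial.coeff (Finsupp.equivFunOnFinite.symm γ)
      (∏ i, (∑ j, MvPolynomial.C (M i j) * MvPolynomial.X j) ^ (β i))) • a β

/-!
Every coefficient of `(Mx)^β` is at most `K^{|β|}` in norm, where `K` bounds the row sums
`∑_j |M_{ij}|`, since the sum of the norms of the coefficients is submultiplicative. There are
at most `d^n` multi-indices `β` with `|β| = n`, and `β!` and `γ!` agree up to a factor `d^n` when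
`|β| = |γ| = n`. So the passage from `f̂` to `f̂(Mx)` costs only geometric factors, which `A`
absorbs. The converse is the same estimate for the inverse matrix, since `f̂(M(M⁻¹x)) = f̂(x)`.
-/

open scoped NNReal

section CoeffNorm

open MvPolynomial

variable {σ R : Type*} [SeminormedCommRing R]

/-- The `ℓ¹` norm of the coefficient family of a polynomial, with values in `ℝ≥0`. It majorizes each
coefficient and is submultiplicative, hence bounds the coefficients of products. -/
def coeffNorm (P : MvPolynomial σ R) : ℝ≥0 :=
  ∑ m ∈ P.support, ‖P.coeff m‖₊

lemma coeffNorm_eq_sum_of_support_subset {P : MvPolynomial σ R} {s : Finset (σ →₀ ℕ)}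
    (hs : P.support ⊆ s) : coeffNorm P = ∑ m ∈ s, ‖P.coeff m‖₊ :=
  sum_subset hs fun m _ hm => by rw [notMem_support_iff.mp hm, nnnorm_zero]

lemma coeffNorm_monomial (m : σ →₀ ℕ) (c : R) : coeffNorm (monomial m c) = ‖c‖₊ := by
  classical
  rw [coeffNorm_eq_sum_of_support_subset support_monomial_subset, sum_singleton, coeff_monomial,
    if_pos rfl]

lemma nnnorm_coeff_le_coeffNorm (P : MvPolynomial σ R) (m : σ →₀ ℕ) :
    ‖P.coeff m‖₊ ≤ coeffNorm P := by
  classical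
  rw [coeffNorm_eq_sum_of_support_subset (subset_insert m P.support)]
  exact single_le_sum (f := fun m => ‖P.coeff m‖₊) (fun _ _ => zero_le) (mem_insert_self _ _)

lemma coeffNorm_add_le (P Q : MvPolynomial σ R) :
    coeffNorm (P + Q) ≤ coeffNorm P + coeffNorm Q := by
  classical
  rw [coeffNorm_eq_sum_of_support_subset support_add,
    coeffNorm_eq_sum_of_support_subset (subset_union_left (s₂ := Q.support)),
    coeffNorm_eq_sum_of_support_subset (subset_union_right (s₁ := P.support)),
    ← sum_add_distrib]
  exact sum_le_sum fun m _ => by rw [coeff_add]; exact nnnorm_add_le _ _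

lemma coeffNorm_sum_le {ι : Type*} (s : Finset ι) (P : ι → MvPolynomial σ R) :
    coeffNorm (∑ i ∈ s, P i) ≤ ∑ i ∈ s, coeffNorm (P i) :=
  le_sum_of_subadditive coeffNorm (by simp [coeffNorm]) coeffNorm_add_le s P

lemma coeffNorm_mul_le (P Q : MvPolynomial σ R) :
    coeffNorm (P * Q) ≤ coeffNorm P * coeffNorm Q :=
  calc coeffNorm (P * Q)
      = coeffNorm (∑ m ∈ P.support, ∑ n ∈ Q.support,
          monomial (m + n) (P.coeff m * Q.coeff n)) := congrArg coeffNorm mul_def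
    _ ≤ ∑ m ∈ P.support, ∑ n ∈ Q.support,
          coeffNorm (monomial (m + n) (P.coeff m * Q.coeff n)) :=
        (coeffNorm_sum_le _ _).trans (sum_le_sum fun _ _ => coeffNorm_sum_le _ _)
    _ ≤ ∑ m ∈ P.support, ∑ n ∈ Q.support, ‖P.coeff m‖₊ * ‖Q.coeff n‖₊ :=
        sum_le_sum fun _ _ => sum_le_sum fun _ _ =>
          (coeffNorm_monomial _ _).trans_le (nnnorm_mul_le _ _)
    _ = coeffNorm P * coeffNorm Q := (sum_mul_sum _ _ _ _).symm

lemma coeffNorm_prod_le [NormOneClass R] {ι : Type*} (s : Finset ι) (P : ι → MvPolynomial σ R) :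
    coeffNorm (∏ i ∈ s, P i) ≤ ∏ i ∈ s, coeffNorm (P i) :=
  le_prod_of_submultiplicative coeffNorm
    (by rw [← C_1, C_apply, coeffNorm_monomial, nnnorm_one]) coeffNorm_mul_le s P

lemma coeffNorm_pow_le [NormOneClass R] (P : MvPolynomial σ R) (n : ℕ) :
    coeffNorm (P ^ n) ≤ coeffNorm P ^ n := by
  simpa using coeffNorm_prod_le (range n) fun _ => P

lemma coeffNorm_toMvPolynomial_le {m n : Type*} [Fintype n] (M : Matrix m n R) (i : m) :
    coeffNorm (M.toMvPolynomial i) ≤ ∑ j, ‖M i j‖₊ :=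
  (coeffNorm_sum_le _ _).trans_eq (sum_congr rfl fun _ _ => coeffNorm_monomial _ _)

end CoeffNorm

section LinearMonomial

open MvPolynomial

variable {m n o R : Type*} [Fintype m] [Fintype n] [Fintype o]

/-- The polynomial `(Mx)^β = ∏_i (∑_j M_{ij} x_j)^{β_i}`. -/
def linearMonomial [CommSemiring R] (M : Matrix m n R) (β : m → ℕ) : MvPolynomial n R :=
  ∏ i, M.toMvPolynomial i ^ β i

lemma isHomogeneous_linearMonomial [CommSemiring R] (M : Matrix m n R) (β : m → ℕ) :
    (linearMonomial M β).IsHomogeneous (∑ i, β i) :=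
  IsHomogeneous.prod _ _ _ fun i _ => by
    simpa using (M.toMvPolynomial_isHomogeneous i).pow (β i)

lemma linearMonomial_one [CommSemiring R] [DecidableEq n] (β : n → ℕ) :
    linearMonomial (1 : Matrix n n R) β = monomial (Finsupp.equivFunOnFinite.symm β) 1 := by
  simp [linearMonomial, monomial_eq, Finsupp.prod_fintype]

lemma linearMonomial_mul [CommSemiring R] (M : Matrix m n R) (N : Matrix n o R) (β : m → ℕ) :
    linearMonomial (M * N) β = bind₁ N.toMvPolynomial (linearMonomial M β) := by
  simp only [linearMonomial, Matrix.toMvPolynomial_mul, map_prod, map_pow]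

lemma bind₁_toMvPolynomial_eq_sum [CommSemiring R] [DecidableEq n] (N : Matrix n o R)
    {P : MvPolynomial n R} {k : ℕ} (hP : P.IsHomogeneous k) :
    bind₁ N.toMvPolynomial P =
      ∑ δ ∈ piAntidiag univ k,
        C (P.coeff (Finsupp.equivFunOnFinite.symm δ)) * linearMonomial N δ := by
  have hsum : bind₁ N.toMvPolynomial P = ∑ δ ∈ P.support, C (P.coeff δ) * linearMonomial N δ :=
    eval₂_eq' _ _ _
  rw [hsum]
  refine sum_of_injOn (fun δ => ⇑δ) DFunLike.coe_injective.injOn (fun δ hδ => ?_)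
    (fun δ _ hδ => ?_) (fun δ _ => by simp only [Finsupp.equivFunOnFinite_symm_coe])
  · simpa [Finsupp.degree_eq_sum] using hP.coeff_eq_zero.mt (mem_support_iff.mp hδ)
  · have hcoeff : P.coeff (Finsupp.equivFunOnFinite.symm δ) = 0 :=
      notMem_support_iff.mp fun hmem => hδ ⟨_, hmem, rfl⟩
    rw [hcoeff, C_0, zero_mul]

lemma coeff_linearMonomial_mul [CommSemiring R] [DecidableEq n] (M : Matrix m n R)
    (N : Matrix n o R) (β : m → ℕ) (γ : o →₀ ℕ) :
    (linearMonomial (M * N) β).coeff γ =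
      ∑ δ ∈ piAntidiag univ (∑ i, β i),
        (linearMonomial M β).coeff (Finsupp.equivFunOnFinite.symm δ) *
          (linearMonomial N δ).coeff γ := by
  rw [linearMonomial_mul, bind₁_toMvPolynomial_eq_sum N (isHomogeneous_linearMonomial M β),
    coeff_sum]
  simp only [coeff_C_mul]

lemma nnnorm_coeff_linearMonomial_le [SeminormedCommRing R] [NormOneClass R] (M : Matrix m n R)
    {K : ℝ≥0} (hK : ∀ i, ∑ j, ‖M i j‖₊ ≤ K) (β : m → ℕ) (γ : n →₀ ℕ) :
    ‖(linearMonomial M β).coeff γ‖₊ ≤ K ^ ∑ i, β i :=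
  calc ‖(linearMonomial M β).coeff γ‖₊
      ≤ coeffNorm (linearMonomial M β) := nnnorm_coeff_le_coeffNorm _ _
    _ ≤ ∏ i, coeffNorm (M.toMvPolynomial i ^ β i) := coeffNorm_prod_le _ _
    _ ≤ ∏ i, K ^ β i := prod_le_prod' fun i _ => (coeffNorm_pow_le _ _).trans <|
        pow_le_pow_left₀ zero_le ((coeffNorm_toMvPolynomial_le M i).trans (hK i)) _
    _ = K ^ ∑ i, β i := prod_pow_eq_pow_sum _ _ _

end LinearMonomial

lemma rpow_le_rpow_abs_mul_rpow {x y c : ℝ} (hx : 0 < x) (hy : 0 < y) (hxy : x ≤ c * y)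
    (hyx : y ≤ c * x) (p : ℝ) : x ^ p ≤ c ^ |p| * y ^ p := by
  have hc : 0 < c := pos_of_mul_pos_left (hx.trans_le hxy) hy.le
  rcases le_total 0 p with hp | hp
  · rw [abs_of_nonneg hp, ← Real.mul_rpow hc.le hy.le]
    exact Real.rpow_le_rpow hx.le hxy hp
  · rw [abs_of_nonpos hp, Real.rpow_neg hc.le, ← div_eq_inv_mul, ← Real.div_rpow hy.le hc.le]
    exact Real.rpow_le_rpow_of_nonpos (by positivity) ((div_le_iff₀' hc).mpr hyx) hp

section MultiIndex

variable {ι : Type*}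

lemma sum_multinomial_piAntidiag [DecidableEq ι] (s : Finset ι) (n : ℕ) :
    ∑ β ∈ piAntidiag s n, Nat.multinomial s β = #s ^ n := by
  simpa using (sum_pow_eq_sum_piAntidiag s (fun _ => (1 : ℕ)) n).symm

lemma card_piAntidiag_le_pow [DecidableEq ι] (s : Finset ι) (n : ℕ) :
    #(piAntidiag s n) ≤ #s ^ n := by
  rw [← sum_multinomial_piAntidiag, card_eq_sum_ones]
  exact sum_le_sum fun β _ => Nat.multinomial_pos s β

variable [Fintype ι]

lemma multinomial_univ_le_pow (γ : ι → ℕ) :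
    Nat.multinomial univ γ ≤ Fintype.card ι ^ ∑ i, γ i := by
  classical
  rw [← card_univ, ← sum_multinomial_piAntidiag]
  exact single_le_sum (f := fun β => Nat.multinomial univ β) (fun _ _ => Nat.zero_le _) (by simp)

lemma prod_factorial_le_pow_mul {β γ : ι → ℕ} (h : ∑ i, β i = ∑ i, γ i) :
    ∏ i, (β i).factorial ≤ Fintype.card ι ^ (∑ i, γ i) * ∏ i, (γ i).factorial :=
  calc ∏ i, (β i).factorial
      ≤ (∑ i, β i).factorial :=
        Nat.le_of_dvd (Nat.factorial_pos _) (Nat.prod_factorial_dvd_factorial_sum _ _)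
    _ = Nat.multinomial univ γ * ∏ i, (γ i).factorial := by
        rw [h, ← Nat.multinomial_spec, mul_comm]
    _ ≤ Fintype.card ι ^ (∑ i, γ i) * ∏ i, (γ i).factorial :=
        Nat.mul_le_mul_right _ (multinomial_univ_le_pow γ)

lemma prod_factorial_rpow_le {β γ : ι → ℕ} (h : ∑ i, β i = ∑ i, γ i) (p : ℝ) :
    ∏ i, ((β i).factorial : ℝ) ^ p ≤
      ((Fintype.card ι : ℝ) ^ |p|) ^ (∑ i, γ i) * ∏ i, ((γ i).factorial : ℝ) ^ p := by
  rw [Real.finsetProd_rpow _ _ fun i _ => by positivity,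
    Real.finsetProd_rpow _ _ fun i _ => by positivity, Real.rpow_pow_comm (by positivity)]
  refine rpow_le_rpow_abs_mul_rpow (by positivity) (by positivity) ?_ ?_ p
  · exact_mod_cast prod_factorial_le_pow_mul h
  · exact_mod_cast h ▸ prod_factorial_le_pow_mul h.symm

end MultiIndex

lemma degTuples_eq_piAntidiag (d n : ℕ) : degTuples d n = piAntidiag univ n := by
  ext β
  simp only [degTuples, mem_filter, Fintype.mem_piFinset, mem_range, mem_piAntidiag, mem_univ,
    implies_true, and_true, and_iff_right_iff_imp]
  rintro rfl i
  exact Nat.lt_succ_of_le (single_le_sum (fun _ _ => Nat.zero_le _) (mem_univ i))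

section LinearChange

variable {E : Type*} [NormedAddCommGroup E] {d : ℕ} {p : ℝ} {a : (Fin d → ℕ) → E}

lemma IsGevreyP.of_norm_le {C A : ℝ} (hC : 0 < C) (hA : 0 ≤ A)
    (h : ∀ β, ‖a β‖ ≤ C * A ^ (∑ i, β i) * ∏ i, ((β i).factorial : ℝ) ^ p) :
    IsGevreyP d p a := by
  refine ⟨C, A + 1, hC, by positivity, fun β => (h β).trans ?_⟩
  gcongr
  exact le_add_of_nonneg_right zero_le_one

variable [NormedSpace ℂ E]

lemma linChangeCoeff_eq_sum (M : Matrix (Fin d) (Fin d) ℂ) (a : (Fin d → ℕ) → E)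
    (γ : Fin d → ℕ) :
    linChangeCoeff M a γ = ∑ β ∈ piAntidiag univ (∑ i, γ i),
      (linearMonomial M β).coeff (Finsupp.equivFunOnFinite.symm γ) • a β := by
  simp only [linChangeCoeff, degTuples_eq_piAntidiag, linearMonomial, Matrix.toMvPolynomial,
    MvPolynomial.C_mul_X_eq_monomial]

lemma linChangeCoeff_one (a : (Fin d → ℕ) → E) : linChangeCoeff 1 a = a := by
  ext γ
  simp [linChangeCoeff_eq_sum, linearMonomial_one, MvPolynomial.coeff_monomial]

lemma linChangeCoeff_linChangeCoeff (M N : Matrix (Fin d) (Fin d) ℂ) (a : (Fin d → ℕ) → E) :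
    linChangeCoeff N (linChangeCoeff M a) = linChangeCoeff (M * N) a := by
  ext γ
  set n := ∑ i, γ i
  set g : Fin d →₀ ℕ := Finsupp.equivFunOnFinite.symm γ
  calc linChangeCoeff N (linChangeCoeff M a) γ
      = ∑ δ ∈ piAntidiag univ n, ∑ β ∈ piAntidiag univ n,
          ((linearMonomial M β).coeff (Finsupp.equivFunOnFinite.symm δ) *
            (linearMonomial N δ).coeff g) • a β := by
        rw [linChangeCoeff_eq_sum]
        refine sum_congr rfl fun δ hδ => ?_
        rw [linChangeCoeff_eq_sum, (mem_piAntidiag.mp hδ).1, smul_sum]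
        simp only [smul_smul, mul_comm, g]
    _ = ∑ β ∈ piAntidiag univ n, (linearMonomial (M * N) β).coeff g • a β := by
        rw [sum_comm]
        refine sum_congr rfl fun β hβ => ?_
        rw [coeff_linearMonomial_mul, (mem_piAntidiag.mp hβ).1, sum_smul]
    _ = linChangeCoeff (M * N) a γ := (linChangeCoeff_eq_sum _ _ _).symm

theorem IsGevreyP.linear_change (ha : IsGevreyP d p a) (M : Matrix (Fin d) (Fin d) ℂ) :
    IsGevreyP d p (linChangeCoeff M a) := by
  obtain ⟨C, A, hC, hA, hCA⟩ := ha
  let K : ℝ≥0 := ∑ i, ∑ j, ‖M i j‖₊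
  have hK (i) : ∑ j, ‖M i j‖₊ ≤ K :=
    single_le_sum (f := fun i => ∑ j, ‖M i j‖₊) (fun _ _ => zero_le) (mem_univ i)
  let D : ℝ := (d : ℝ) ^ |p|
  refine .of_norm_le (A := d * (K * (A * D))) hC (by positivity) fun γ => ?_
  set n := ∑ i, γ i
  set G := ∏ i, ((γ i).factorial : ℝ) ^ p
  have hterm : ∀ β ∈ piAntidiag univ n,
      ‖(linearMonomial M β).coeff (Finsupp.equivFunOnFinite.symm γ) • a β‖ ≤
        K ^ n * (C * A ^ n * (D ^ n * G)) := fun β hβ => by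
    have hβn : ∑ i, β i = n := (mem_piAntidiag.mp hβ).1
    have hfac : ∏ i, ((β i).factorial : ℝ) ^ p ≤ D ^ n * G := by
      simpa [D] using prod_factorial_rpow_le hβn p
    rw [norm_smul]
    gcongr
    · exact_mod_cast hβn ▸ nnnorm_coeff_linearMonomial_le M hK β _
    · exact (hβn ▸ hCA β).trans (by gcongr)
  calc ‖linChangeCoeff M a γ‖
      ≤ #(piAntidiag (univ : Finset (Fin d)) n) • (K ^ n * (C * A ^ n * (D ^ n * G))) := by
        rw [linChangeCoeff_eq_sum]
        exact (norm_sum_le _ _).trans (sum_le_card_nsmul _ _ _ hterm)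
    _ ≤ (d : ℝ) ^ n * (K ^ n * (C * A ^ n * (D ^ n * G))) := by
        rw [nsmul_eq_mul]
        gcongr
        exact_mod_cast (card_piAntidiag_le_pow univ n).trans_eq (by rw [card_fin])
    _ = C * (d * (K * (A * D))) ^ n * G := by ring

end LinearChange

theorem gevrey_linear_change_general {E : Type*} [NormedAddCommGroup E] [NormedSpace ℂ E] {d : ℕ}
    (p : ℝ) (a : (Fin d → ℕ) → E) {M : Matrix (Fin d) (Fin d) ℂ} (hM : IsUnit M) :
    IsGevreyP d p (linChangeCoeff M a) ↔ IsGevreyP d p a := by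
  refine ⟨fun h => ?_, fun h => h.linear_change M⟩
  obtain ⟨N, hMN⟩ := hM.exists_right_inv
  simpa only [linChangeCoeff_linChangeCoeff, hMN, linChangeCoeff_one] using h.linear_change N

theorem gevrey_linear_change {E : Type*} [NormedAddCommGroup E] [NormedSpace ℂ E]
    [CompleteSpace E] (d : ℕ) (p : ℝ) (hp : 0 ≤ p) (a : (Fin d → ℕ) → E) :
    IsGevreyP d p a ↔
      ∀ M : Matrix (Fin d) (Fin d) ℂ, IsUnit M → IsGevreyP d p (linChangeCoeff M a) :=
  ⟨fun h _ hM => (gevrey_linear_change_general p a hM).2 h,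
    fun h => (gevrey_linear_change_general p a isUnit_one).1 (h 1 isUnit_one)⟩

end
end

section
/- Let P ∈ ℂ{x₁,…,x_d} with P(0) = 0 and ∂_{x₁}P(0) ≠ 0, and let ξ : (ℂ^d,0) → (ℂ^d,0) be the holomorphic change of variables ξ₁ = P(x), ξ_j = x_j for j = 2,…,d. Then for every α ∈ ℕ^d \ {0} there exist germs B_{j,β}^{α} ∈ ℂ{x} depending only on P (given by polynomials in the partial derivatives of P, independent of f), indexed by 1 ≤ j ≤ |α|−1 and β ∈ ℕ^{d−1} with (0,β) ≤ α and |β| ≤ |α|−j, such that for every function f holomorphic near 0 ∈ ℂ^d, ∂_{α,x}(f ∘ ξ) = (∂_{x₁}P)^{α₁}⋯(∂_{x_d}P)^{α_d} · (∂_{ξ₁}^{|α|} f) ∘ ξ + Σ_{j=1}^{|α|−1} Σ_{(0,β)≤α, |β|≤|α|−j} B_{j,β}^{α} · (∂_{ξ₁}^{j} ∂_{β,ξ'} f) ∘ ξ + δ̄_α · (∂_{α,ξ} f) ∘ ξ, where δ̄_α = 1 if α₁ = 0 and δ̄_α = 0 if α₁ ≥ 1. -/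
/-!
STATEMENT 11 (Lemma: derivatives after the change of variables ξ₁ = P(x), ξ_j = x_j).
Let P ∈ ℂ{x₁,…,x_d} with P(0) = 0 and ∂_{x₁}P(0) ≠ 0, and let ξ(x) = (P(x), x₂,…,x_d).
For every α ∈ ℕ^d \ {0} there exist germs B_{j,β} ∈ ℂ{x} depending only on P (not on f),
indexed by 1 ≤ j ≤ |α|−1 and β ∈ ℕ^{d−1} with (0,β) ≤ α, |β| ≤ |α|−j, such that for
every f holomorphic near 0,
∂_{α,x}(f∘ξ) = (∂_{x₁}P)^{α₁}⋯(∂_{x_d}P)^{α_d} (∂_{ξ₁}^{|α|}f)∘ξ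
  + Σ_{j=1}^{|α|−1} Σ_{(0,β)≤α, |β|≤|α|−j} B_{j,β} (∂_{ξ₁}^j ∂_{β,ξ'}f)∘ξ
  + δ̄_α (∂_{α,ξ}f)∘ξ,   near 0,
where δ̄_α = 1 if α₁ = 0 and δ̄_α = 0 otherwise.
We work with d+1 ≥ 1 variables indexed by `Fin (d+1)`; a multi-index β ∈ ℕ^{d−1} in the
variables ξ₂,…,ξ_d is encoded as a multi-index γ on all variables with γ₁ = 0, so that
∂_{ξ₁}^j ∂_{β,ξ'} = ∂_{γ'} with γ' = γ updated to have first entry j.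
-/

noncomputable section

open Finset

/-- The partial derivative `∂/∂x_v` of a function of several complex variables. -/
def pdF {n : ℕ} (v : Fin n) (f : (Fin n → ℂ) → ℂ) : (Fin n → ℂ) → ℂ :=
  fun x => fderiv ℂ f x (Pi.single v 1)

/-- The iterated partial derivative `∂_α = ∂₁^{α₁} ∘ ⋯ ∘ ∂_d^{α_d}`. -/
def mderivF {n : ℕ} (α : Fin n → ℕ) : ((Fin n → ℂ) → ℂ) → ((Fin n → ℂ) → ℂ) :=
  fun f => (List.ofFn fun i : Fin n => (pdF i)^[α i]).foldr (· ∘ ·) id f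

/-!
Let `ξ` replace the `k`-th coordinate of `x` by `P x`. By the chain rule,
`∂ᵢ(b · (∂_δ f) ∘ ξ) = ∂ᵢb · (∂_δ f) ∘ ξ + b ∂ᵢP · (∂_{δ+eₖ} f) ∘ ξ + [i ≠ k] b · (∂_{δ+eᵢ} f) ∘ ξ`.
Starting from `f ∘ ξ` and adding one derivative at a time, always choosing the middle summand
gives the leading term `∏ (∂ᵢP)^{αᵢ} · (∂ₖ^{|α|} f) ∘ ξ`, and always choosing the last one gives
`(∂_α f) ∘ ξ`, which survives only if `αₖ = 0`. Every other nonzero choice ends at some `δ` with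
`1 ≤ δₖ ≤ |α| - 1`, `δᵢ ≤ αᵢ` for `i ≠ k`, and `|δ| ≤ |α|`: each of the three summands maps the
set of these multi-indices for `α` into the one for `α + eᵢ`.
-/

open scoped Topology

section PartialDerivatives

variable {n : ℕ} {a x : Fin n → ℂ} {f g : (Fin n → ℂ) → ℂ} {α β : Fin n → ℕ} {l : List (Fin n)}

lemma pdF_congr (i : Fin n) (h : f =ᶠ[𝓝 a] g) : pdF i f =ᶠ[𝓝 a] pdF i g :=
  h.fderiv.mono fun _ hx => DFunLike.congr_fun hx (Pi.single i 1)

lemma pdF_iterate_congr (i : Fin n) (m : ℕ) (h : f =ᶠ[𝓝 a] g) :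
    (pdF i)^[m] f =ᶠ[𝓝 a] (pdF i)^[m] g := by
  induction m with
  | zero => exact h
  | succ m ih => simpa only [Function.iterate_succ_apply'] using pdF_congr i ih

lemma analyticAt_pdF (i : Fin n) (h : AnalyticAt ℂ f a) : AnalyticAt ℂ (pdF i f) a :=
  ((ContinuousLinearMap.apply ℂ ℂ (Pi.single i 1 : Fin n → ℂ)).analyticAt _).comp h.fderiv

lemma analyticAt_pdF_iterate (i : Fin n) (m : ℕ) (h : AnalyticAt ℂ f a) :
    AnalyticAt ℂ ((pdF i)^[m] f) a := by
  induction m with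
  | zero => exact h
  | succ m ih => simpa only [Function.iterate_succ_apply'] using analyticAt_pdF i ih

lemma pdF_sub (i : Fin n) (hf : DifferentiableAt ℂ f x) (hg : DifferentiableAt ℂ g x) :
    pdF i (f - g) x = pdF i f x - pdF i g x := by
  simp only [pdF, fderiv_sub hf hg, _root_.sub_apply]

lemma pdF_sum {ι : Type*} (i : Fin n) {s : Finset ι} {F : ι → (Fin n → ℂ) → ℂ}
    (h : ∀ j ∈ s, DifferentiableAt ℂ (F j) x) :
    pdF i (fun z => ∑ j ∈ s, F j z) x = ∑ j ∈ s, pdF i (F j) x := by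
  simp only [pdF, fderiv_fun_sum h, _root_.sum_apply]

lemma pdF_mul (i : Fin n) (hf : DifferentiableAt ℂ f x) (hg : DifferentiableAt ℂ g x) :
    pdF i (fun z => f z * g z) x = pdF i f x * g x + f x * pdF i g x := by
  simp only [pdF, fderiv_fun_mul hf hg, _root_.add_apply,
    _root_.smul_apply, smul_eq_mul]
  ring

lemma pdF_comm (i j : Fin n) (h : AnalyticAt ℂ f a) :
    pdF i (pdF j f) a = pdF j (pdF i f) a := by
  have second_fderiv (i j : Fin n) :
      pdF i (pdF j f) a = fderiv ℂ (fderiv ℂ f) a (Pi.single i 1) (Pi.single j 1) := by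
    unfold pdF
    rw [fderiv_clm_apply h.fderiv.differentiableAt (differentiableAt_const _)]
    simp
  rw [second_fderiv, second_fderiv]
  exact h.contDiffAt.isSymmSndFDerivAt_of_omega _ _

lemma pdF_pdF_iterate_comm (i j : Fin n) (m : ℕ) (h : AnalyticAt ℂ f a) :
    pdF i ((pdF j)^[m] f) =ᶠ[𝓝 a] (pdF j)^[m] (pdF i f) := by
  induction m with
  | zero => rfl
  | succ m ih =>
    simp only [Function.iterate_succ_apply']
    have comm : pdF i (pdF j ((pdF j)^[m] f)) =ᶠ[𝓝 a] pdF j (pdF i ((pdF j)^[m] f)) :=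
      (analyticAt_pdF_iterate j m h).eventually_analyticAt.mono fun _ hx => pdF_comm i j hx
    exact comm.trans (pdF_congr j ih)

/-- The part of `∂_α` in the variables listed in `l`, applied from right to left; it makes
`mderivF` accessible to induction on the list of variables. -/
def listDeriv (l : List (Fin n)) (α : Fin n → ℕ) (f : (Fin n → ℂ) → ℂ) : (Fin n → ℂ) → ℂ :=
  l.foldr (fun i => (pdF i)^[α i]) f

lemma mderivF_eq_listDeriv (α : Fin n → ℕ) (f : (Fin n → ℂ) → ℂ) :
    mderivF α f = listDeriv (List.finRange n) α f := by
  rw [mderivF, List.ofFn_eq_map, listDeriv]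
  induction List.finRange n with
  | nil => rfl
  | cons i l ih => exact congrArg (pdF i)^[α i] ih

lemma analyticAt_listDeriv (l : List (Fin n)) (α : Fin n → ℕ) (h : AnalyticAt ℂ f a) :
    AnalyticAt ℂ (listDeriv l α f) a := by
  induction l with
  | nil => exact h
  | cons i l ih => exact analyticAt_pdF_iterate i _ ih

lemma listDeriv_congr (f : (Fin n → ℂ) → ℂ) (h : ∀ i ∈ l, α i = β i) :
    listDeriv l α f = listDeriv l β f :=
  List.foldr_ext _ _ _ fun i hi _ => by rw [h i hi]

lemma pdF_listDeriv {i : Fin n} (hl : l.Nodup) (hi : i ∈ l) (α : Fin n → ℕ)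
    (h : AnalyticAt ℂ f a) :
    pdF i (listDeriv l α f) =ᶠ[𝓝 a] listDeriv l (α + Pi.single i 1) f := by
  induction l with
  | nil => simp at hi
  | cons j l ih =>
    obtain ⟨hj, hl⟩ := List.nodup_cons.mp hl
    change pdF i ((pdF j)^[α j] (listDeriv l α f)) =ᶠ[𝓝 a]
      (pdF j)^[(α + Pi.single i 1 : Fin n → ℕ) j] (listDeriv l (α + Pi.single i 1) f)
    rcases eq_or_ne i j with rfl | hij
    · have tail : listDeriv l (α + Pi.single i 1) f = listDeriv l α f :=
        listDeriv_congr f fun m hm => by simp [ne_of_mem_of_not_mem hm hj]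
      rw [tail, Pi.add_apply, Pi.single_eq_same, Function.iterate_succ_apply']
    · have head : (α + Pi.single i 1 : Fin n → ℕ) j = α j := by simp [hij.symm]
      rw [head]
      exact (pdF_pdF_iterate_comm i j _ (analyticAt_listDeriv l α h)).trans
        (pdF_iterate_congr j _ (ih hl (List.mem_of_ne_of_mem hij hi)))

lemma analyticAt_mderivF (α : Fin n → ℕ) (h : AnalyticAt ℂ f a) :
    AnalyticAt ℂ (mderivF α f) a := by
  simpa only [mderivF_eq_listDeriv] using analyticAt_listDeriv _ α h

lemma pdF_mderivF (i : Fin n) (α : Fin n → ℕ) (h : AnalyticAt ℂ f a) :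
    pdF i (mderivF α f) =ᶠ[𝓝 a] mderivF (α + Pi.single i 1) f := by
  simpa only [mderivF_eq_listDeriv] using
    pdF_listDeriv (List.nodup_finRange n) (List.mem_finRange i) α h

lemma mderivF_zero (f : (Fin n → ℂ) → ℂ) : mderivF 0 f = f := by
  rw [mderivF_eq_listDeriv]
  exact List.foldr_fixed _

lemma mderivF_single (i : Fin n) (m : ℕ) (h : AnalyticAt ℂ f a) :
    mderivF (Pi.single i m) f =ᶠ[𝓝 a] (pdF i)^[m] f := by
  induction m with
  | zero => rw [Pi.single_zero, mderivF_zero]; rfl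
  | succ m ih =>
    rw [Pi.single_add, Function.iterate_succ_apply']
    exact (pdF_mderivF i _ h).symm.trans (pdF_congr i ih)

end PartialDerivatives

section MultiIndices

variable {ι : Type*} [DecidableEq ι]

lemma sum_add_single_one [Fintype ι] (α : ι → ℕ) (i : ι) :
    ∑ j, (α + Pi.single i 1 : ι → ℕ) j = ∑ j, α j + 1 := by
  simp [Finset.sum_add_distrib]

lemma multiIndex_induction [Finite ι] {p : (ι → ℕ) → Prop} (single : ∀ i, p (Pi.single i 1))
    (add_single : ∀ α i, α ≠ 0 → p α → p (α + Pi.single i 1)) (α : ι → ℕ) (hα : α ≠ 0) :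
    p α := by
  cases nonempty_fintype ι
  induction hN : ∑ i, α i generalizing α with
  | zero =>
    refine absurd ?_ hα
    simpa [funext_iff] using hN
  | succ N ih =>
    obtain ⟨i, hi⟩ := Function.ne_iff.mp hα
    have hle : Pi.single i 1 ≤ α :=
      update_le_iff.mpr ⟨Nat.one_le_iff_ne_zero.mpr hi, fun j _ => Nat.zero_le (α j)⟩
    obtain ⟨β, rfl⟩ : ∃ β : ι → ℕ, α = β + Pi.single i 1 :=
      ⟨_, (tsub_add_cancel_of_le hle).symm⟩
    rcases eq_or_ne β 0 with rfl | hβ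
    · simpa using single i
    · exact add_single β i hβ (ih β hβ (Nat.succ.inj ((sum_add_single_one β i).symm.trans hN)))

variable [Fintype ι]

lemma sum_update_add (γ : ι → ℕ) (k : ι) (j : ℕ) :
    ∑ i, Function.update γ k j i + γ k = ∑ i, γ i + j := by
  rw [Finset.sum_update_of_mem (Finset.mem_univ k), add_assoc,
    ← Finset.sum_eq_sum_sdiff_singleton_add (Finset.mem_univ k) γ, add_comm]

/-- The multi-indices occurring in the remainder of order `α`, where `k` is the variable being
replaced. A pair `(j, β)` of the informal statement is merged into one multi-index `δ`, with
`δ k = j` and the entries of `β` elsewhere. -/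
def remainderIndices (k : ι) (α : ι → ℕ) : Finset (ι → ℕ) :=
  {δ ∈ Finset.Iic (Function.update α k (∑ i, α i - 1)) | δ k ≠ 0 ∧ ∑ i, δ i ≤ ∑ i, α i}

variable {k : ι} {α δ : ι → ℕ}

lemma mem_remainderIndices : δ ∈ remainderIndices k α ↔
    (δ k ≤ ∑ i, α i - 1 ∧ ∀ i ≠ k, δ i ≤ α i) ∧ δ k ≠ 0 ∧ ∑ i, δ i ≤ ∑ i, α i := by
  simp [remainderIndices, le_update_iff]

lemma mem_remainderIndices_add_single (h : δ ∈ remainderIndices k α) (i : ι) :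
    δ ∈ remainderIndices k (α + Pi.single i 1) := by
  rw [mem_remainderIndices] at h ⊢
  rw [sum_add_single_one]
  refine ⟨⟨by omega, fun j hj => ?_⟩, by omega, by omega⟩
  exact (h.1.2 j hj).trans (Nat.le_add_right _ _)

lemma add_single_self_mem_remainderIndices (h : δ ∈ remainderIndices k α) (i : ι) :
    δ + Pi.single k 1 ∈ remainderIndices k (α + Pi.single i 1) := by
  rw [mem_remainderIndices] at h ⊢
  rw [sum_add_single_one, sum_add_single_one]
  simp only [Pi.add_apply, Pi.single_eq_same]
  refine ⟨⟨by omega, fun j hj => ?_⟩, by omega, by omega⟩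
  rw [Pi.single_eq_of_ne hj]
  exact (h.1.2 j hj).trans (Nat.le_add_right _ _)

lemma add_single_mem_remainderIndices (h : δ ∈ remainderIndices k α) {i : ι} (hi : i ≠ k) :
    δ + Pi.single i 1 ∈ remainderIndices k (α + Pi.single i 1) := by
  rw [mem_remainderIndices] at h ⊢
  rw [sum_add_single_one, sum_add_single_one]
  simp only [Pi.add_apply, Pi.single_eq_of_ne hi.symm]
  refine ⟨⟨by omega, fun j hj => ?_⟩, by omega, by omega⟩
  exact Nat.add_le_add_right (h.1.2 j hj) _

lemma sum_remainderIndices {M : Type*} [AddCommMonoid M] (F : (ι → ℕ) → M) :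
    ∑ δ ∈ remainderIndices k α, F δ =
      ∑ j ∈ Finset.Icc 1 (∑ i, α i - 1),
        ∑ γ ∈ (Fintype.piFinset fun i => Finset.range (α i + 1)).filter
            (fun γ => γ k = 0 ∧ ∑ i, γ i ≤ ∑ i, α i - j),
          F (Function.update γ k j) := by
  rw [Finset.sum_sigma']
  refine Finset.sum_nbij' (fun δ => ⟨δ k, Function.update δ k 0⟩)
    (fun p => Function.update p.2 k p.1) ?_ ?_ ?_ ?_ ?_
  · intro δ hδ
    rw [mem_remainderIndices] at hδ
    have hsum := sum_update_add δ k 0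
    simp only [Finset.mem_sigma, Finset.mem_Icc, Finset.mem_filter, Fintype.mem_piFinset,
      Finset.mem_range, Nat.lt_succ_iff, Function.update_self, true_and]
    refine ⟨by omega, ?_, by omega⟩
    exact update_le_iff.mpr ⟨Nat.zero_le _, hδ.1.2⟩
  · rintro ⟨j, γ⟩ h
    simp only [Finset.mem_sigma, Finset.mem_Icc, Finset.mem_filter, Fintype.mem_piFinset,
      Finset.mem_range, Nat.lt_succ_iff] at h
    have hsum := sum_update_add γ k j
    rw [mem_remainderIndices]
    simp only [Function.update_self]
    refine ⟨⟨by omega, fun i hi => ?_⟩, by omega, by omega⟩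
    simpa [hi] using h.2.1 i
  · simp
  · rintro ⟨j, γ⟩ h
    simp only [Finset.mem_sigma, Finset.mem_filter] at h
    simp [← h.2.2.1]
  · simp

end MultiIndices

section ChangeOfVariables

variable {n : ℕ} {k : Fin n} {P : (Fin n → ℂ) → ℂ} {a x : Fin n → ℂ} {f g b : (Fin n → ℂ) → ℂ}
  {α : Fin n → ℕ}

/-- The change of variables `ξ` that replaces the `k`-th coordinate of `x` by `P x`. -/
def changeVar (k : Fin n) (P : (Fin n → ℂ) → ℂ) (x : Fin n → ℂ) : Fin n → ℂ :=
  Function.update x k (P x)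

lemma changeVar_eq_add_single (k : Fin n) (P : (Fin n → ℂ) → ℂ) :
    changeVar k P =
      fun x => x + ContinuousLinearMap.single ℂ (fun _ : Fin n => ℂ) k (P x - x k) := by
  ext x i
  rcases eq_or_ne i k with rfl | hi
  · simp [changeVar]
  · simp [changeVar, hi]

lemma analyticAt_changeVar (hP : AnalyticAt ℂ P a) : AnalyticAt ℂ (changeVar k P) a := by
  have hk : AnalyticAt ℂ (fun x : Fin n → ℂ => x k) a :=
    (ContinuousLinearMap.proj (R := ℂ) (φ := fun _ : Fin n => ℂ) k).analyticAt a
  rw [changeVar_eq_add_single]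
  exact analyticAt_id.add
    (((ContinuousLinearMap.single ℂ (fun _ : Fin n => ℂ) k).analyticAt _).comp (hP.sub hk))

lemma analyticAt_comp_changeVar (hP : AnalyticAt ℂ P a) (hg : AnalyticAt ℂ g (changeVar k P a)) :
    AnalyticAt ℂ (fun x => g (changeVar k P x)) a :=
  hg.comp (analyticAt_changeVar hP)

lemma eventually_changeVar {p : (Fin n → ℂ) → Prop} (hP : AnalyticAt ℂ P a)
    (h : ∀ᶠ y in 𝓝 (changeVar k P a), p y) : ∀ᶠ x in 𝓝 a, p (changeVar k P x) :=
  (analyticAt_changeVar hP).continuousAt.eventually h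

lemma pdF_comp_changeVar (i : Fin n) (hP : DifferentiableAt ℂ P x)
    (hg : DifferentiableAt ℂ g (changeVar k P x)) :
    pdF i (fun z => g (changeVar k P z)) x =
      pdF i P x * pdF k g (changeVar k P x) +
        (if i = k then 0 else 1) * pdF i g (changeVar k P x) := by
  have hξ : HasFDerivAt (changeVar k P)
      (.id ℂ _ + (ContinuousLinearMap.single ℂ (fun _ : Fin n => ℂ) k).comp
        (fderiv ℂ P x - ContinuousLinearMap.proj k)) x := by
    rw [changeVar_eq_add_single]
    exact (hasFDerivAt_id x).add
      ((ContinuousLinearMap.single ℂ (fun _ : Fin n => ℂ) k).hasFDerivAt.comp x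
        (hP.hasFDerivAt.sub (hasFDerivAt_apply k x)))
  have hchain := (hg.hasFDerivAt.comp x hξ).fderiv
  have hsingle (c : ℂ) : (Pi.single k c : Fin n → ℂ) = c • Pi.single k 1 := by
    rw [← Pi.single_smul, smul_eq_mul, mul_one]
  change fderiv ℂ (g ∘ changeVar k P) x (Pi.single i 1) = _
  rw [hchain]
  simp only [ContinuousLinearMap.comp_apply, _root_.add_apply,
    ContinuousLinearMap.id_apply, _root_.sub_apply, ContinuousLinearMap.proj_apply,
    ContinuousLinearMap.single_apply, map_add, pdF]
  rw [hsingle, map_smul, smul_eq_mul]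
  rcases eq_or_ne i k with rfl | hi
  · simp; ring
  · simp [hi, hi.symm]; ring

lemma pdF_mul_mderivF_comp_changeVar (hP : AnalyticAt ℂ P a) (hb : AnalyticAt ℂ b a)
    (hf : AnalyticAt ℂ f (changeVar k P a)) (i : Fin n) (δ : Fin n → ℕ) :
    pdF i (fun z => b z * mderivF δ f (changeVar k P z)) =ᶠ[𝓝 a] fun x =>
      pdF i b x * mderivF δ f (changeVar k P x) +
      b x * pdF i P x * mderivF (δ + Pi.single k 1) f (changeVar k P x) +
      (if i = k then 0 else 1) * b x * mderivF (δ + Pi.single i 1) f (changeVar k P x) := by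
  have hδ := analyticAt_mderivF δ hf
  filter_upwards [hb.eventually_analyticAt, hP.eventually_analyticAt,
    (analyticAt_comp_changeVar hP hδ).eventually_analyticAt,
    eventually_changeVar hP hδ.eventually_analyticAt,
    eventually_changeVar hP (pdF_mderivF k δ hf),
    eventually_changeVar hP (pdF_mderivF i δ hf)] with x hbx hPx hcomp hδx hk hi
  rw [pdF_mul i hbx.differentiableAt hcomp.differentiableAt,
    pdF_comp_changeVar i hPx.differentiableAt hδx.differentiableAt, hk, hi]
  ring

/-- `T` is an operator `f ↦ ∑_{δ ∈ S} B_δ · (∂_δ f) ∘ ξ` near `a`, with analytic coefficients `B_δ`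
that do not depend on `f`. -/
def IsPullbackDiffOp (k : Fin n) (P : (Fin n → ℂ) → ℂ) (a : Fin n → ℂ) (S : Finset (Fin n → ℕ))
    (T : ((Fin n → ℂ) → ℂ) → (Fin n → ℂ) → ℂ) : Prop :=
  ∃ B : (Fin n → ℕ) → (Fin n → ℂ) → ℂ, (∀ δ, AnalyticAt ℂ (B δ) a) ∧
    ∀ f, AnalyticAt ℂ f (changeVar k P a) →
      T f =ᶠ[𝓝 a] fun x => ∑ δ ∈ S, B δ x * mderivF δ f (changeVar k P x)

namespace IsPullbackDiffOp

variable {S S' : Finset (Fin n → ℕ)} {T T' : ((Fin n → ℂ) → ℂ) → (Fin n → ℂ) → ℂ}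

lemma congr (hT : IsPullbackDiffOp k P a S T)
    (h : ∀ f, AnalyticAt ℂ f (changeVar k P a) → T' f =ᶠ[𝓝 a] T f) :
    IsPullbackDiffOp k P a S T' :=
  let ⟨B, hB, hTB⟩ := hT
  ⟨B, hB, fun f hf => (h f hf).trans (hTB f hf)⟩

lemma zero : IsPullbackDiffOp k P a S fun _ _ => 0 :=
  ⟨0, fun _ => analyticAt_const, fun f _ => .of_eq (by ext; simp)⟩

lemma add (hT : IsPullbackDiffOp k P a S T) (hT' : IsPullbackDiffOp k P a S T') :
    IsPullbackDiffOp k P a S fun f => T f + T' f := by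
  obtain ⟨B, hB, hTB⟩ := hT
  obtain ⟨B', hB', hTB'⟩ := hT'
  refine ⟨B + B', fun δ => (hB δ).add (hB' δ), fun f hf => ?_⟩
  filter_upwards [hTB f hf, hTB' f hf] with x hx hx'
  simp only [Pi.add_apply, hx, hx', add_mul, Finset.sum_add_distrib]

lemma sum {ι : Type*} {s : Finset ι} {T : ι → ((Fin n → ℂ) → ℂ) → (Fin n → ℂ) → ℂ}
    (h : ∀ j ∈ s, IsPullbackDiffOp k P a S (T j)) :
    IsPullbackDiffOp k P a S fun f => ∑ j ∈ s, T j f := by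
  classical
  induction s using Finset.induction_on with
  | empty => exact zero
  | insert j s hj ih =>
    simp only [Finset.sum_insert hj]
    exact (h j (Finset.mem_insert_self j s)).add
      (ih fun i hi => h i (Finset.mem_insert_of_mem hi))

lemma monomial (hb : AnalyticAt ℂ b a) {δ : Fin n → ℕ} (hδ : b ≠ 0 → δ ∈ S) :
    IsPullbackDiffOp k P a S fun f x => b x * mderivF δ f (changeVar k P x) := by
  rcases eq_or_ne b 0 with rfl | hb0
  · simpa only [Pi.zero_apply, zero_mul] using zero
  refine ⟨Pi.single δ b, fun δ' => ?_, fun f _ => .of_eq ?_⟩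
  · rcases eq_or_ne δ' δ with rfl | h
    · rwa [Pi.single_eq_same]
    · rw [Pi.single_eq_of_ne h]
      exact analyticAt_const
  · ext x
    rw [Finset.sum_eq_single_of_mem δ (hδ hb0) fun δ' _ h => by simp [Pi.single_eq_of_ne h],
      Pi.single_eq_same]

lemma pdF_monomial (hP : AnalyticAt ℂ P a) (hb : AnalyticAt ℂ b a) (i : Fin n) {δ : Fin n → ℕ}
    (hδ : δ ∈ S) (hδk : δ + Pi.single k 1 ∈ S) (hδi : i ≠ k → δ + Pi.single i 1 ∈ S) :
    IsPullbackDiffOp k P a S fun f => pdF i fun x => b x * mderivF δ f (changeVar k P x) :=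
  (((monomial (analyticAt_pdF i hb) fun _ => hδ).add
    (monomial (hb.mul (analyticAt_pdF i hP)) fun _ => hδk)).add
    (monomial (analyticAt_const.mul hb) fun h => hδi fun hi => h (by ext; simp [hi]))).congr
    fun _ hf => pdF_mul_mderivF_comp_changeVar hP hb hf i δ

lemma pdF_comp (hP : AnalyticAt ℂ P a) (hT : IsPullbackDiffOp k P a S T) (i : Fin n)
    (hS : ∀ δ ∈ S, δ ∈ S') (hSk : ∀ δ ∈ S, δ + Pi.single k 1 ∈ S')
    (hSi : i ≠ k → ∀ δ ∈ S, δ + Pi.single i 1 ∈ S') :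
    IsPullbackDiffOp k P a S' fun f => pdF i (T f) := by
  obtain ⟨B, hB, hTB⟩ := hT
  refine (sum (s := S) fun δ hδ => pdF_monomial hP (hB δ) i (hS δ hδ) (hSk δ hδ)
    fun hi => hSi hi δ hδ).congr fun f hf => (pdF_congr i (hTB f hf)).trans ?_
  have hterms : ∀ᶠ x in 𝓝 a, ∀ δ ∈ S,
      AnalyticAt ℂ (fun z => B δ z * mderivF δ f (changeVar k P z)) x :=
    (Filter.eventually_all_finset S).mpr fun δ _ => ((hB δ).mul
      (analyticAt_comp_changeVar hP (analyticAt_mderivF δ hf))).eventually_analyticAt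
  filter_upwards [hterms] with x hx
  rw [pdF_sum i fun δ hδ => (hx δ hδ).differentiableAt, Finset.sum_apply]

end IsPullbackDiffOp

/-- The coefficient `(∂₁P)^{α₁} ⋯ (∂ₙP)^{αₙ}` of the leading term. -/
def leadingCoeff (P : (Fin n → ℂ) → ℂ) (α : Fin n → ℕ) (x : Fin n → ℂ) : ℂ :=
  ∏ i, pdF i P x ^ α i

/-- The leading term `(∂₁P)^{α₁} ⋯ (∂ₙP)^{αₙ} · (∂ₖ^{|α|} f) ∘ ξ` of `∂_α (f ∘ ξ)`. -/
def leadingTerm (k : Fin n) (P : (Fin n → ℂ) → ℂ) (α : Fin n → ℕ) (f : (Fin n → ℂ) → ℂ)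
    (x : Fin n → ℂ) : ℂ :=
  leadingCoeff P α x * mderivF (Pi.single k (∑ i, α i)) f (changeVar k P x)

/-- The term `δ̄_α · (∂_α f) ∘ ξ`, which is present if `∂_α` only differentiates in the variables
that `ξ` leaves unchanged. -/
def tangentialTerm (k : Fin n) (P : (Fin n → ℂ) → ℂ) (α : Fin n → ℕ) (f : (Fin n → ℂ) → ℂ)
    (x : Fin n → ℂ) : ℂ :=
  (if α k = 0 then 1 else 0) * mderivF α f (changeVar k P x)

/-- What is left of `∂_α (f ∘ ξ)` after subtracting the leading and the tangential term. -/
def remainder (k : Fin n) (P : (Fin n → ℂ) → ℂ) (α : Fin n → ℕ) (f : (Fin n → ℂ) → ℂ) :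
    (Fin n → ℂ) → ℂ :=
  mderivF α (fun z => f (changeVar k P z)) - leadingTerm k P α f - tangentialTerm k P α f

lemma analyticAt_leadingCoeff (hP : AnalyticAt ℂ P a) (α : Fin n → ℕ) :
    AnalyticAt ℂ (leadingCoeff P α) a :=
  Finset.analyticAt_fun_prod _ fun i _ => (analyticAt_pdF i hP).pow _

lemma leadingCoeff_add_single (P : (Fin n → ℂ) → ℂ) (α : Fin n → ℕ) (i : Fin n)
    (x : Fin n → ℂ) :
    leadingCoeff P (α + Pi.single i 1) x = leadingCoeff P α x * pdF i P x := by
  have hsingle : ∏ j, pdF j P x ^ (Pi.single i 1 : Fin n → ℕ) j = pdF i P x := by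
    simp [Pi.single_apply]
  simp only [leadingCoeff, Pi.add_apply, pow_add, Finset.prod_mul_distrib, hsingle]

lemma isPullbackDiffOp_leadingTerm_step (hP : AnalyticAt ℂ P a) (hα : α ≠ 0) (i : Fin n) :
    IsPullbackDiffOp k P a (remainderIndices k (α + Pi.single i 1)) fun f =>
      pdF i (leadingTerm k P α f) - leadingTerm k P (α + Pi.single i 1) f := by
  have hcoeff := analyticAt_leadingCoeff hP α
  have hsum : ∑ j, α j ≠ 0 := by simpa [funext_iff] using hα
  have normal_mem : Pi.single k (∑ j, α j) ∈ remainderIndices k (α + Pi.single i 1) := by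
    rw [mem_remainderIndices, sum_add_single_one]
    exact ⟨⟨by simp, fun j hj => by simp [hj]⟩, by simpa using hsum, by simp⟩
  have mixed_mem (hi : i ≠ k) : Pi.single k (∑ j, α j) + Pi.single i 1 ∈
      remainderIndices k (α + Pi.single i 1) := by
    rw [mem_remainderIndices, sum_add_single_one, sum_add_single_one]
    exact ⟨⟨by simp [hi.symm], fun j hj => by simp [hj]⟩, by simpa [hi.symm] using hsum, by simp⟩
  refine ((IsPullbackDiffOp.monomial (analyticAt_pdF i hcoeff) fun _ => normal_mem).add
    (IsPullbackDiffOp.monomial (b := fun x => (if i = k then 0 else 1) * leadingCoeff P α x)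
      (analyticAt_const.mul hcoeff) fun h => mixed_mem fun hi => h (by ext; simp [hi]))).congr
    fun f hf => ?_
  filter_upwards [pdF_mul_mderivF_comp_changeVar hP hcoeff hf i (Pi.single k (∑ j, α j))]
    with x hx
  simp only [Pi.sub_apply, Pi.add_apply]
  rw [leadingTerm, sum_add_single_one, leadingCoeff_add_single, Pi.single_add]
  exact sub_eq_of_eq_add (hx.trans (by ring))

lemma isPullbackDiffOp_tangentialTerm_step (hP : AnalyticAt ℂ P a) (hα : α ≠ 0) (i : Fin n) :
    IsPullbackDiffOp k P a (remainderIndices k (α + Pi.single i 1)) fun f =>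
      pdF i (tangentialTerm k P α f) - tangentialTerm k P (α + Pi.single i 1) f := by
  have mem (hk : α k = 0) : α + Pi.single k 1 ∈ remainderIndices k (α + Pi.single i 1) := by
    have hsum : ∑ j, α j ≠ 0 := by simpa [funext_iff] using hα
    rw [mem_remainderIndices, sum_add_single_one, sum_add_single_one]
    refine ⟨⟨?_, fun j hj => ?_⟩, by simp, le_rfl⟩
    · simpa [hk, Nat.one_le_iff_ne_zero] using hsum
    · simp [hj]
  refine (IsPullbackDiffOp.monomial (b := fun x => (if α k = 0 then 1 else 0) * pdF i P x)
    (analyticAt_const.mul (analyticAt_pdF i hP))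
    fun h => mem (by_contra fun hk => h (by ext; simp [hk]))).congr fun f hf => ?_
  filter_upwards [pdF_mul_mderivF_comp_changeVar hP
    (b := fun _ => if α k = 0 then 1 else 0) analyticAt_const hf i α] with x hx
  have hconst : pdF i (fun _ : Fin n → ℂ => if α k = 0 then (1 : ℂ) else 0) x = 0 := by
    simp [pdF]
  have hindicator : (if (α + Pi.single i 1 : Fin n → ℕ) k = 0 then (1 : ℂ) else 0) =
      (if i = k then 0 else 1) * if α k = 0 then 1 else 0 := by
    rcases eq_or_ne i k with rfl | hi
    · simp
    · simp [hi, hi.symm]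
  rw [Pi.sub_apply, tangentialTerm, hindicator]
  exact sub_eq_of_eq_add (hx.trans (by rw [hconst]; ring))

lemma remainder_single (hP : AnalyticAt ℂ P a) (hf : AnalyticAt ℂ f (changeVar k P a))
    (i : Fin n) : remainder k P (Pi.single i 1) f =ᶠ[𝓝 a] 0 := by
  have hleft := pdF_mderivF i 0 (analyticAt_comp_changeVar hP hf)
  have hright (j : Fin n) := eventually_changeVar hP (pdF_mderivF j 0 hf)
  simp only [zero_add, mderivF_zero] at hleft hright
  filter_upwards [hleft, hright i, hright k, hP.eventually_analyticAt,
    eventually_changeVar hP hf.eventually_analyticAt] with x hx hi hk hPx hfx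
  rw [pdF_comp_changeVar i hPx.differentiableAt hfx.differentiableAt, hi, hk] at hx
  have hcoeff : leadingCoeff P (Pi.single i 1) x = pdF i P x := by
    simpa [leadingCoeff] using leadingCoeff_add_single P 0 i x
  have hsum : ∑ j, (Pi.single i 1 : Fin n → ℕ) j = 1 := by simp
  simp only [remainder, Pi.sub_apply, leadingTerm, tangentialTerm, ← hx, hcoeff, hsum]
  rcases eq_or_ne i k with rfl | hi
  · simp
  · simp [hi, hi.symm]

lemma remainder_add_single (hP : AnalyticAt ℂ P a) (hf : AnalyticAt ℂ f (changeVar k P a))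
    (α : Fin n → ℕ) (i : Fin n) :
    remainder k P (α + Pi.single i 1) f =ᶠ[𝓝 a]
      pdF i (remainder k P α f) +
        (pdF i (leadingTerm k P α f) - leadingTerm k P (α + Pi.single i 1) f) +
        (pdF i (tangentialTerm k P α f) - tangentialTerm k P (α + Pi.single i 1) f) := by
  have hcomp := analyticAt_comp_changeVar hP hf
  have hlead : AnalyticAt ℂ (leadingTerm k P α f) a := (analyticAt_leadingCoeff hP α).mul
    (analyticAt_comp_changeVar hP (analyticAt_mderivF _ hf))
  have htan : AnalyticAt ℂ (tangentialTerm k P α f) a := analyticAt_const.mul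
    (analyticAt_comp_changeVar hP (analyticAt_mderivF _ hf))
  filter_upwards [pdF_mderivF i α hcomp, (analyticAt_mderivF α hcomp).eventually_analyticAt,
    hlead.eventually_analyticAt, htan.eventually_analyticAt] with x hx hcompx hleadx htanx
  simp only [remainder, Pi.add_apply, Pi.sub_apply, ← hx]
  rw [pdF_sub i (hcompx.sub hleadx).differentiableAt htanx.differentiableAt,
    pdF_sub i hcompx.differentiableAt hleadx.differentiableAt]
  ring

theorem isPullbackDiffOp_remainder (hP : AnalyticAt ℂ P a) (hα : α ≠ 0) :
    IsPullbackDiffOp k P a (remainderIndices k α) (remainder k P α) := by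
  refine multiIndex_induction
    (p := fun α => IsPullbackDiffOp k P a (remainderIndices k α) (remainder k P α))
    (fun i => IsPullbackDiffOp.zero.congr fun f hf => remainder_single hP hf i)
    (fun α i hα ih => ?_) α hα
  exact (((ih.pdF_comp hP i (fun _ hδ => mem_remainderIndices_add_single hδ i)
      (fun _ hδ => add_single_self_mem_remainderIndices hδ i)
      (fun hi _ hδ => add_single_mem_remainderIndices hδ hi)).add
      (isPullbackDiffOp_leadingTerm_step hP hα i)).add
      (isPullbackDiffOp_tangentialTerm_step hP hα i)).congr
      fun f hf => remainder_add_single hP hf α i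

end ChangeOfVariables

theorem deriv_change_of_variables_general {n : ℕ} (k : Fin n) {P : (Fin n → ℂ) → ℂ}
    {a : Fin n → ℂ} (hP : AnalyticAt ℂ P a) {α : Fin n → ℕ} (hα : α ≠ 0) :
    ∃ B : ℕ → (Fin n → ℕ) → ((Fin n → ℂ) → ℂ),
      (∀ j γ, AnalyticAt ℂ (B j γ) a) ∧
      ∀ f : (Fin n → ℂ) → ℂ, AnalyticAt ℂ f (Function.update a k (P a)) →
        ∀ᶠ x in 𝓝 a,
          mderivF α (fun z => f (Function.update z k (P z))) x =
            (∏ i, pdF i P x ^ α i) * (pdF k)^[∑ i, α i] f (Function.update x k (P x)) +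
              (∑ j ∈ Finset.Icc 1 (∑ i, α i - 1),
                ∑ γ ∈ (Fintype.piFinset fun i => Finset.range (α i + 1)).filter
                    (fun γ => γ k = 0 ∧ ∑ i, γ i ≤ ∑ i, α i - j),
                  B j γ x * mderivF (Function.update γ k j) f (Function.update x k (P x))) +
              (if α k = 0 then 1 else 0) * mderivF α f (Function.update x k (P x)) := by
  obtain ⟨B, hB, hremainder⟩ := isPullbackDiffOp_remainder (k := k) hP hα
  refine ⟨fun j γ => B (Function.update γ k j), fun j γ => hB _, fun f hf => ?_⟩
  filter_upwards [hremainder f hf, eventually_changeVar hP (mderivF_single k (∑ i, α i) hf)]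
    with x hx hlead
  rw [sum_remainderIndices] at hx
  simp only [remainder, Pi.sub_apply, leadingTerm, hlead] at hx
  rw [sub_sub, sub_eq_iff_eq_add] at hx
  exact hx.trans (by rw [leadingCoeff, tangentialTerm, changeVar]; ring)

theorem deriv_change_of_variables (d : ℕ) (P : (Fin (d + 1) → ℂ) → ℂ)
    (hP_an : AnalyticAt ℂ P 0) (hP0 : P 0 = 0) (hP1 : pdF 0 P 0 ≠ 0)
    (α : Fin (d + 1) → ℕ) (hα : α ≠ 0) :
    ∃ B : ℕ → (Fin (d + 1) → ℕ) → ((Fin (d + 1) → ℂ) → ℂ),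
      (∀ j γ, AnalyticAt ℂ (B j γ) 0) ∧
      ∀ f : (Fin (d + 1) → ℂ) → ℂ, AnalyticAt ℂ f 0 →
        ∀ᶠ x in nhds (0 : Fin (d + 1) → ℂ),
          mderivF α (fun z => f (Function.update z 0 (P z))) x =
            (∏ i, (pdF i P x) ^ (α i)) *
                (pdF (0 : Fin (d + 1)))^[∑ i, α i] f (Function.update x 0 (P x)) +
              (∑ j ∈ Finset.Icc 1 ((∑ i, α i) - 1),
                ∑ γ ∈ (Fintype.piFinset fun i => Finset.range (α i + 1)).filter
                    (fun γ : Fin (d + 1) → ℕ =>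
                      γ 0 = 0 ∧ (∑ i, γ i) ≤ (∑ i, α i) - j),
                  B j γ x * mderivF (Function.update γ 0 j) f (Function.update x 0 (P x))) +
              (if α 0 = 0 then 1 else 0) * mderivF α f (Function.update x 0 (P x)) := by
  have hbase : Function.update (0 : Fin (d + 1) → ℂ) 0 (P 0) = 0 := by
    rw [hP0]
    exact Function.update_eq_self 0 (0 : Fin (d + 1) → ℂ)
  simpa only [hbase] using deriv_change_of_variables_general 0 hP_an hα

end
end

section
/- Define a sequence (a_n)_{n≥0} by a₀ = 0, a₁ = a₂ = 1, and a_n = (n−1)² a_{n−1} + (n−2)(n−3) a_{n−2} for n ≥ 3, and let φ = (1+√5)/2. Then for every n ≥ 1 the normalized sequence α_n := a_n/((n−1)!)² satisfies 1 ≤ α_n ≤ φⁿ; equivalently, ((n−1)!)² ≤ a_n ≤ φⁿ ((n−1)!)² for all n ≥ 1. -/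
/-!
STATEMENT 18.
With a₀ = 0, a₁ = a₂ = 1 and a_n = (n−1)² a_{n−1} + (n−2)(n−3) a_{n−2} for n ≥ 3, and
φ = (1+√5)/2 the golden ratio, for every n ≥ 1 one has ((n−1)!)² ≤ a_n ≤ φⁿ ((n−1)!)²,
i.e. the normalized sequence α_n = a_n/((n−1)!)² satisfies 1 ≤ α_n ≤ φⁿ.
-/

/-- The sequence a₀ = 0, a₁ = a₂ = 1, a_n = (n−1)² a_{n−1} + (n−2)(n−3) a_{n−2} (n ≥ 3). -/
def aseq : ℕ → ℕ
  | 0 => 0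
  | 1 => 1
  | 2 => 1
  | (n + 3) => (n + 2) ^ 2 * aseq (n + 2) + (n + 1) * n * aseq (n + 1)

/-!
After division by `((n - 1)!) ^ 2` the recurrence reads `α n = α (n - 1) + c n * α (n - 2)` with
`0 ≤ c n ≤ 1`. So `α` is nondecreasing from `α 1 = 1`, and it grows at most as fast as the
Fibonacci sequence, which satisfies `fib n ≤ φ ^ (n - 1)`.
-/

open Nat

theorem factorial_sq_le_aseq_succ : ∀ n : ℕ, n ! ^ 2 ≤ aseq (n + 1)
  | 0 => le_rfl
  | 1 => le_rfl
  | n + 2 =>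
    calc
      (n + 2)! ^ 2 = (n + 2) ^ 2 * (n + 1)! ^ 2 := by rw [factorial_succ, mul_pow]
      _ ≤ (n + 2) ^ 2 * aseq (n + 2) := by gcongr; exact factorial_sq_le_aseq_succ (n + 1)
      _ ≤ aseq (n + 3) := by rw [aseq]; exact Nat.le_add_right _ _

theorem aseq_succ_le_fib_mul_factorial_sq : ∀ n : ℕ, aseq (n + 1) ≤ fib (n + 1) * n ! ^ 2
  | 0 => le_rfl
  | 1 => le_rfl
  | n + 2 => by
    have coeff_le : (n + 1) * n ≤ ((n + 2) * (n + 1)) ^ 2 := by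
      calc
        (n + 1) * n ≤ (n + 2) * (n + 1) := by gcongr <;> omega
        _ ≤ ((n + 2) * (n + 1)) ^ 2 := Nat.le_self_pow two_ne_zero _
    calc
      aseq (n + 3) = (n + 2) ^ 2 * aseq (n + 2) + (n + 1) * n * aseq (n + 1) := by rw [aseq]
      _ ≤ (n + 2) ^ 2 * (fib (n + 2) * (n + 1)! ^ 2) +
          ((n + 2) * (n + 1)) ^ 2 * (fib (n + 1) * n ! ^ 2) := by
        gcongr
        · exact aseq_succ_le_fib_mul_factorial_sq (n + 1)
        · exact aseq_succ_le_fib_mul_factorial_sq n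
      _ = fib (n + 3) * (n + 2)! ^ 2 := by
        rw [fib_add_two (n := n + 1), factorial_succ (n + 1), factorial_succ n]
        ring

theorem coe_fib_succ_le_goldenRatio_pow (n : ℕ) : (fib (n + 1) : ℝ) ≤ Real.goldenRatio ^ n := by
  rw [← Real.fib_succ_sub_goldenConj_mul_fib]
  have : Real.goldenConj * fib n ≤ 0 :=
    mul_nonpos_of_nonpos_of_nonneg Real.goldenConj_neg.le (fib n).cast_nonneg
  linarith

theorem aseq_factorial_bounds :
    ∀ n : ℕ, 1 ≤ n →
      (((n - 1).factorial : ℝ)) ^ 2 ≤ (aseq n : ℝ) ∧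
        (aseq n : ℝ) ≤ ((1 + Real.sqrt 5) / 2) ^ n * (((n - 1).factorial : ℝ)) ^ 2 := by
  intro n hn
  obtain ⟨m, rfl⟩ := Nat.exists_eq_add_of_le' hn
  rw [Nat.add_sub_cancel]
  refine ⟨mod_cast factorial_sq_le_aseq_succ m, ?_⟩
  calc
    (aseq (m + 1) : ℝ) ≤ fib (m + 1) * (m ! : ℝ) ^ 2 :=
      mod_cast aseq_succ_le_fib_mul_factorial_sq m
    _ ≤ Real.goldenRatio ^ (m + 1) * (m ! : ℝ) ^ 2 := by
      gcongr
      calc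
        (fib (m + 1) : ℝ) ≤ Real.goldenRatio ^ m := coe_fib_succ_le_goldenRatio_pow m
        _ ≤ Real.goldenRatio ^ (m + 1) :=
          pow_le_pow_right₀ Real.one_lt_goldenRatio.le m.le_succ
end
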